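/- With E_{I,J} as defined, for all subsets I, J ⊆ {1,…,n} with |I| ≡ |J| (mod 2), one has Σ_{K ⊆ {1,…,n}} E_{I,K} · E_{K,J} = δ_{I,J} · Σ_{i=1}^n λ_i X_i^{p_i} in k[X_1,…,X_n], where δ_{I,J} is 1 if I = J and 0 otherwise. Equivalently, the matrix M (rows indexed by even subsets, columns by odd subsets, entries M_{I,J} = E_{I,J}) and the matrix N (rows indexed by odd subsets, columns by even subsets, entries N_{I,J} = E_{I,J}) satisfy M·N = (Σ_i λ_i X_i^{p_i})·Id and N·M = (Σ_i λ_i X_i^{p_i})·Id, i.e. (M,N) is a matrix factorization of Σ_i λ_i X_i^{p_i}. -/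

import Mathlib

open MvPolynomial

/-- The entry `E_{I,J}` of the matrix factorization: it equals
`(−1)^{p(i,I)} X_i^{ℓ_i}` if `I = J ∪ {i}` with `i ∉ J`, it equals
`(−1)^{p(j,J)} λ_j X_j^{p_j−ℓ_j}` if `J = I ∪ {j}` with `j ∉ I`, and `0` otherwise;
here `p(i,I) = |{j ∈ I : j ≤ i}|`. -/
noncomputable def MFentry (k : Type*) [CommRing k] (n : ℕ) (lam : Fin n → k)
    (p ℓ : Fin n → ℕ) (I J : Finset (Fin n)) : MvPolynomial (Fin n) k :=
  if J ⊆ I ∧ (I \ J).card = 1 then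
    ∑ i ∈ I \ J, (-1 : MvPolynomial (Fin n) k) ^ (I.filter (· ≤ i)).card * X i ^ ℓ i
  else if I ⊆ J ∧ (J \ I).card = 1 then
    ∑ j ∈ J \ I,
      (-1 : MvPolynomial (Fin n) k) ^ (J.filter (· ≤ j)).card * C (lam j) * X j ^ (p j - ℓ j)
  else 0

/-!
The matrix `E` is a sum over `i` of matrices `D i`, each of which joins `I` only to the set
`I ∆ {i}`. Going from `I` to `I ∆ {i}` and back picks up `X_i ^ ℓ_i` once and
`λ_i X_i ^ (p_i - ℓ_i)` once, with equal signs, so `D i * D i` is the scalar `λ_i X_i ^ p_i`. For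
`i < j`, flipping `i` changes the parity of the number of elements up to `j`, whereas flipping `j`
leaves the elements up to `i` alone; hence `D i` and `D j` anticommute and
`(∑ i, D i) ^ 2 = ∑ i, D i ^ 2`.
-/

open scoped symmDiff

theorem sum_mul_sum_self_of_pairwise_anticommute {ι A : Type*} [NonUnitalNonAssocSemiring A]
    (s : Finset ι) (f : ι → A)
    (hf : (s : Set ι).Pairwise fun i j => f i * f j + f j * f i = 0) :
    (∑ i ∈ s, f i) * ∑ i ∈ s, f i = ∑ i ∈ s, f i * f i := by
  classical
  induction s using Finset.induction_on with
  | empty => simp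
  | insert i s hi ih =>
    have hcross : f i * ∑ j ∈ s, f j + (∑ j ∈ s, f j) * f i = 0 := by
      rw [Finset.mul_sum, Finset.sum_mul, ← Finset.sum_add_distrib]
      exact Finset.sum_eq_zero fun j hj =>
        hf (Finset.mem_insert_self i s) (Finset.mem_insert_of_mem hj)
          (ne_of_mem_of_not_mem hj hi).symm
    have hs := ih (hf.mono (Finset.coe_subset.2 (Finset.subset_insert i s)))
    rw [Finset.sum_insert hi, Finset.sum_insert hi, ← hs, add_mul, mul_add, mul_add, add_assoc,
      ← add_assoc (f i * ∑ j ∈ s, f j), hcross, zero_add]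

section SymmDiffSingleton

variable {α : Type*} [DecidableEq α] {s : Finset α} {a b : α}

theorem symmDiff_singleton_of_mem (h : a ∈ s) : s ∆ {a} = s.erase a := by
  ext b
  simp only [Finset.mem_symmDiff, Finset.mem_singleton, Finset.mem_erase]
  grind

theorem symmDiff_singleton_of_notMem (h : a ∉ s) : s ∆ {a} = insert a s := by
  ext b
  simp only [Finset.mem_symmDiff, Finset.mem_singleton, Finset.mem_insert]
  grind

theorem mem_symmDiff_singleton_self : a ∈ s ∆ {a} ↔ a ∉ s := by
  simp [Finset.mem_symmDiff]

theorem mem_symmDiff_singleton_of_ne (h : a ≠ b) : a ∈ s ∆ {b} ↔ a ∈ s := by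
  simp [Finset.mem_symmDiff, h]

end SymmDiffSingleton

section KoszulSign

variable {ι R : Type*} [LinearOrder ι] [Monoid R] [HasDistribNeg R]

/-- The sign `(-1) ^ p(i, I ∪ {i})`, where `p(i, K)` is the number of elements of `K` up to `i`.
Taking `I ∪ {i}` instead of `I` gives both cases of `E_{I,J}` the same sign, as `I ∪ {i}` is the
larger of `I` and `I ∆ {i}`. -/
def koszulSign (I : Finset ι) (i : ι) : R :=
  (-1) ^ ((insert i I).filter (· ≤ i)).card

theorem koszulSign_mul_self (I : Finset ι) (i : ι) :
    (koszulSign I i * koszulSign I i : R) = 1 := by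
  rw [koszulSign, ← pow_add, Even.neg_one_pow ⟨_, rfl⟩]

theorem koszulSign_symmDiff_of_le (I : Finset ι) {i j : ι} (h : j ≤ i) :
    (koszulSign (I ∆ {i}) j : R) = koszulSign I j := by
  have hfilter : (insert j (I ∆ {i})).filter (· ≤ j) = (insert j I).filter (· ≤ j) := by
    ext m
    simp only [Finset.mem_filter, Finset.mem_insert, Finset.mem_symmDiff, Finset.mem_singleton]
    grind
  rw [koszulSign, koszulSign, hfilter]

theorem koszulSign_insert_of_lt {I : Finset ι} {i j : ι} (hi : i ∉ I) (h : i < j) :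
    (koszulSign (insert i I) j : R) = -koszulSign I j := by
  have hmem : i ∉ (insert j I).filter (· ≤ j) := by simp [hi, h.ne]
  rw [koszulSign, koszulSign, Finset.insert_comm, Finset.filter_insert, if_pos h.le,
    Finset.card_insert_of_notMem hmem, pow_succ, mul_neg_one]

theorem koszulSign_symmDiff_of_lt (I : Finset ι) {i j : ι} (h : i < j) :
    (koszulSign (I ∆ {i}) j : R) = -koszulSign I j := by
  by_cases hi : i ∈ I
  · rw [symmDiff_singleton_of_mem hi, ← neg_eq_iff_eq_neg,
      ← koszulSign_insert_of_lt (Finset.notMem_erase i I) h, Finset.insert_erase hi]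
  · rw [symmDiff_singleton_of_notMem hi, koszulSign_insert_of_lt hi h]

end KoszulSign

section KoszulMatrix

variable {ι R : Type*} [LinearOrder ι] [CommRing R] (a b : ι → R)

/-- The entry of the Koszul matrix of `∑ i, a i * b i` in row `I` and column `I ∆ {i}`. -/
def koszulCoeff (I : Finset ι) (i : ι) : R :=
  koszulSign I i * if i ∈ I then a i else b i

theorem koszulCoeff_mul_koszulCoeff_self (I : Finset ι) (i : ι) :
    koszulCoeff a b I i * koszulCoeff a b (I ∆ {i}) i = a i * b i := by
  have hsign : (koszulSign I i * koszulSign I i : R) = 1 := koszulSign_mul_self I i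
  simp only [koszulCoeff, koszulSign_symmDiff_of_le I le_rfl, mem_symmDiff_singleton_self]
  split_ifs <;> linear_combination (a i * b i) * hsign

theorem koszulCoeff_anticommute (I : Finset ι) {i j : ι} (hij : i ≠ j) :
    koszulCoeff a b I i * koszulCoeff a b (I ∆ {i}) j +
      koszulCoeff a b I j * koszulCoeff a b (I ∆ {j}) i = 0 := by
  simp only [koszulCoeff, mem_symmDiff_singleton_of_ne hij, mem_symmDiff_singleton_of_ne hij.symm]
  rcases hij.lt_or_gt with h | h <;>
    rw [koszulSign_symmDiff_of_lt I h, koszulSign_symmDiff_of_le I h.le] <;> ring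

/-- The part of the Koszul matrix of `∑ i, a i * b i` that adds or removes the element `i`. -/
def koszulFlip (i : ι) : Matrix (Finset ι) (Finset ι) R :=
  .of fun I J => if J = I ∆ {i} then koszulCoeff a b I i else 0

theorem koszulFlip_apply (i : ι) (I J : Finset ι) :
    koszulFlip a b i I J = if J = I ∆ {i} then koszulCoeff a b I i else 0 :=
  rfl

variable [Fintype ι]

theorem koszulFlip_mul_apply (i : ι) (N : Matrix (Finset ι) (Finset ι) R) (I J : Finset ι) :
    (koszulFlip a b i * N) I J = koszulCoeff a b I i * N (I ∆ {i}) J := by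
  simp [Matrix.mul_apply, koszulFlip_apply]

theorem koszulFlip_mul_self (i : ι) :
    koszulFlip a b i * koszulFlip a b i = Matrix.scalar (Finset ι) (a i * b i) := by
  ext I J
  simp only [koszulFlip_mul_apply, koszulFlip_apply, symmDiff_symmDiff_cancel_right, mul_ite,
    mul_zero, koszulCoeff_mul_koszulCoeff_self, Matrix.scalar_apply, Matrix.diagonal_apply,
    eq_comm]

theorem koszulFlip_anticommute {i j : ι} (hij : i ≠ j) :
    koszulFlip a b i * koszulFlip a b j + koszulFlip a b j * koszulFlip a b i = 0 := by
  ext I J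
  simp only [Matrix.add_apply, Matrix.zero_apply, koszulFlip_mul_apply, koszulFlip_apply,
    symmDiff_right_comm I {j} {i}, mul_ite, mul_zero]
  split_ifs
  · exact koszulCoeff_anticommute a b I hij
  · exact add_zero 0

/-- The Koszul matrix of `∑ i, a i * b i`, with the differential of the Koszul complex of `a` and
the opposite one of `b` put into a single matrix indexed by all subsets, both parities together. -/
def koszulMatrix : Matrix (Finset ι) (Finset ι) R :=
  ∑ i, koszulFlip a b i

theorem koszulMatrix_apply (I J : Finset ι) :
    koszulMatrix a b I J = ∑ i, if J = I ∆ {i} then koszulCoeff a b I i else 0 := by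
  simp only [koszulMatrix, Matrix.sum_apply, koszulFlip_apply]

theorem koszulMatrix_apply_symmDiff (I : Finset ι) (i : ι) :
    koszulMatrix a b I (I ∆ {i}) = koszulCoeff a b I i := by
  simp [koszulMatrix_apply]

theorem koszulMatrix_apply_eq_zero {I J : Finset ι} (h : ∀ i, J ≠ I ∆ {i}) :
    koszulMatrix a b I J = 0 := by
  simp [koszulMatrix_apply, h]

theorem matrix_factorization_general :
    koszulMatrix a b * koszulMatrix a b = Matrix.scalar (Finset ι) (∑ i, a i * b i) := by
  rw [koszulMatrix, sum_mul_sum_self_of_pairwise_anticommute _ _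
    fun i _ j _ hij => koszulFlip_anticommute a b hij, map_sum]
  exact Finset.sum_congr rfl fun i _ => koszulFlip_mul_self a b i

end KoszulMatrix

theorem MFentry_eq_koszulMatrix_apply (k : Type*) [CommRing k] (n : ℕ) (lam : Fin n → k)
    (p ℓ : Fin n → ℕ) (I J : Finset (Fin n)) :
    MFentry k n lam p ℓ I J =
      koszulMatrix (fun i => X i ^ ℓ i) (fun i => C (lam i) * X i ^ (p i - ℓ i)) I J := by
  unfold MFentry
  split_ifs with hJI hIJ
  · obtain ⟨i, hi, rfl⟩ :=
      Finset.covBy_iff_exists_erase.1 (Finset.covBy_iff_card_sdiff_eq_one.2 hJI)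
    rw [Finset.sdiff_erase_self hi, Finset.sum_singleton, ← symmDiff_singleton_of_mem hi,
      koszulMatrix_apply_symmDiff, koszulCoeff, koszulSign, Finset.insert_eq_of_mem hi, if_pos hi]
  · obtain ⟨j, hj, rfl⟩ :=
      Finset.covBy_iff_exists_insert.1 (Finset.covBy_iff_card_sdiff_eq_one.2 hIJ)
    rw [Finset.insert_sdiff_cancel hj, Finset.sum_singleton, ← symmDiff_singleton_of_notMem hj,
      koszulMatrix_apply_symmDiff, koszulCoeff, koszulSign, symmDiff_singleton_of_notMem hj,
      if_neg hj, mul_assoc]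
  · rw [← Finset.covBy_iff_card_sdiff_eq_one] at hJI hIJ
    refine (koszulMatrix_apply_eq_zero _ _ ?_).symm
    rintro i rfl
    by_cases hi : i ∈ I
    · exact hJI (symmDiff_singleton_of_mem hi ▸ Finset.erase_covBy hi)
    · exact hIJ (symmDiff_singleton_of_notMem hi ▸ Finset.covBy_insert hi)

/-- For all subsets `I, J ⊆ {1,…,n}` with `|I| ≡ |J| (mod 2)` one has
`Σ_K E_{I,K}·E_{K,J} = δ_{I,J}·Σ_i λ_i X_i^{p_i}`; i.e. the matrices `M` (rows indexed
by even subsets, columns by odd ones) and `N` (rows odd, columns even) with entries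
`E_{I,J}` form a matrix factorization `M·N = N·M = (Σ_i λ_i X_i^{p_i})·Id`. -/
theorem matrix_factorization (k : Type*) [CommRing k] (n : ℕ) (hn : 1 ≤ n)
    (lam : Fin n → k) (p ℓ : Fin n → ℕ) (hp : ∀ i, 2 ≤ p i)
    (hℓ : ∀ i, 1 ≤ ℓ i ∧ ℓ i ≤ p i - 1)
    (I J : Finset (Fin n)) (hIJ : I.card % 2 = J.card % 2) :
    ∑ K : Finset (Fin n), MFentry k n lam p ℓ I K * MFentry k n lam p ℓ K J =
      if I = J then ∑ i, C (lam i) * X i ^ p i else 0 := by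
  have hpow (i : Fin n) : X i ^ ℓ i * (C (lam i) * X i ^ (p i - ℓ i)) = C (lam i) * X i ^ p i := by
    rw [mul_left_comm, pow_mul_pow_sub _ ((hℓ i).2.trans (Nat.sub_le _ _))]
  simp only [MFentry_eq_koszulMatrix_apply, ← Matrix.mul_apply, matrix_factorization_general,
    Matrix.scalar_apply, Matrix.diagonal_apply, hpow]
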